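/- For every n ≥ 0, the expectation E_n = (Σ_{k=0}^{n} k·T_{n,k})/T_n of the number of non-zero-blocks of a uniformly random (c,m)-colored B_n-partition satisfies E_n = T_{n+1}/(m·T_n) − (1 + c)/m; equivalently, m·Σ_{k=0}^{n} k·T_{n,k} = T_{n+1} − (1 + c)·T_n. -/

import Mathlib

def Tnk (m c : ℕ) : ℕ → ℕ → ℕ
  | 0, 0 => 1
  | 0, _ + 1 => 0
  | n + 1, 0 => c * Tnk m c n 0
  | n + 1, k + 1 => Tnk m c n k + (m * (k + 1) + c) * Tnk m c n (k + 1)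

def Ttot (m c n : ℕ) : ℕ := ∑ k ∈ Finset.range (n + 1), Tnk m c n k

/-- The expectation `E_n = (∑_k k·T_{n,k})/T_n` of the number of non-zero-blocks. -/
noncomputable def En (m c n : ℕ) : ℝ :=
  (∑ k ∈ Finset.range (n + 1), (k : ℝ) * Tnk m c n k) / Ttot m c n

theorem Tnk_zero_of_lt (m c : ℕ) : ∀ n k, n < k → Tnk m c n k = 0
  | 0, 0, h => by omega
  | 0, _ + 1, _ => by simp [Tnk]
  | n + 1, 0, h => by omega
  | n + 1, k + 1, h => by
    simp [Tnk, Tnk_zero_of_lt m c n k (by omega), Tnk_zero_of_lt m c n (k + 1) (by omega)]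

theorem Ttot_succ (m c n : ℕ) :
    Ttot m c (n + 1) =
      (1 + c) * Ttot m c n + m * ∑ k ∈ Finset.range (n + 1), k * Tnk m c n k := by
  have h : ∑ k ∈ Finset.range (n + 2), (m * k + c) * Tnk m c n k
      = ∑ k ∈ Finset.range (n + 1), (m * k + c) * Tnk m c n k := by
    rw [Finset.sum_range_succ, Tnk_zero_of_lt m c n (n + 1) (by omega)]
    simp
  rw [Finset.sum_range_succ'] at h
  unfold Ttot
  rw [Finset.sum_range_succ']
  simp only [Tnk, Finset.sum_add_distrib]
  simp only [mul_zero, zero_add] at h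
  rw [add_assoc, h, Finset.mul_sum, Finset.mul_sum, ← Finset.sum_add_distrib,
    ← Finset.sum_add_distrib]
  exact Finset.sum_congr rfl fun k _ => by ring

theorem Ttot_pos (m c : ℕ) (hc : 0 < c) (n : ℕ) : 0 < Ttot m c n := by
  induction n with
  | zero => simp [Ttot, Tnk]
  | succ n ih => rw [Ttot_succ]; positivity

/-- `E_n = T_{n+1}/(m·T_n) − (1+c)/m`; equivalently,
`m·∑_k k·T_{n,k} = T_{n+1} − (1+c)·T_n`. -/
theorem stmt_4 (m c : ℕ) (hm : 0 < m) (hc : 0 < c) (n : ℕ) :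
    En m c n = (Ttot m c (n + 1) : ℝ) / (m * Ttot m c n) - (1 + c) / m ∧
    (m : ℤ) * ∑ k ∈ Finset.range (n + 1), (k : ℤ) * Tnk m c n k =
      (Ttot m c (n + 1) : ℤ) - (1 + c) * Ttot m c n := by
  have h := Ttot_succ m c n
  have hp := Ttot_pos m c hc n
  constructor
  · have h' : (Ttot m c (n + 1) : ℝ) = (1 + c) * Ttot m c n +
        m * ∑ k ∈ Finset.range (n + 1), (k : ℝ) * Tnk m c n k := by exact_mod_cast h
    have hp' : (Ttot m c n : ℝ) ≠ 0 := by positivity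
    have hm' : (m : ℝ) ≠ 0 := by positivity
    rw [En, h']
    field_simp
    ring
  · have h' : (Ttot m c (n + 1) : ℤ) = (1 + c) * Ttot m c n +
        m * ∑ k ∈ Finset.range (n + 1), (k : ℤ) * Tnk m c n k := by exact_mod_cast h
    rw [h']
    ring
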